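/- arXiv:1701.01054 — 2 statements merged into one kernel-verified Lean document; each statement's English description precedes it below -/
import Mathlib

section
/- Let ζ, μ > 0, let a ∈ ℝ, and let s > 0 be a real number with s^ζ > |a|. Then ∫_0^∞ e^{-s x} · x^{μ-1} · E_{ζ,μ}(-a x^ζ) dx = s^{ζ-μ} / (s^ζ + a). -/
open Real MeasureTheory

/-!
The Mittag-Leffler series is integrated term by term. By the Gamma integral, the `k`-th term
`(-a)^k / Γ(ζ k + μ) * x^(ζ k + μ - 1) * e^(-s x)` has integral `s^(-μ) * (-a / s^ζ)^k`, and its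
absolute value has integral `s^(-μ) * (|a| / s^ζ)^k`. Since `|a| < s^ζ`, the latter are summable,
which justifies the interchange of sum and integral
(`hasSum_integral_of_summable_integral_norm`); the value is then a geometric series.
-/

/-- The Gamma integral, normalised so that the Gamma factor of the Mittag-Leffler coefficient
cancels. -/
lemma integral_mittagLeffler_term (ζ μ b s : ℝ) (hζ : 0 < ζ) (hμ : 0 < μ) (hs : 0 < s) (k : ℕ) :
    ∫ x in Set.Ioi (0 : ℝ),
        b ^ k / Gamma (ζ * k + μ) * (x ^ (ζ * k + μ - 1) * exp (-(s * x)))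
      = (s ^ μ)⁻¹ * (b / s ^ ζ) ^ k := by
  have hp : 0 < ζ * k + μ := by positivity
  have hG : Gamma (ζ * k + μ) ≠ 0 := (Gamma_pos_of_pos hp).ne'
  rw [integral_const_mul, integral_rpow_mul_exp_neg_mul_Ioi hp hs, one_div,
    inv_rpow hs.le, rpow_add hs, rpow_mul hs.le, rpow_natCast, div_pow]
  field_simp

lemma integrable_mittagLeffler_term (ζ μ b s : ℝ) (hζ : 0 < ζ) (hμ : 0 < μ) (hs : 0 < s)
    (k : ℕ) :
    Integrable (fun x : ℝ ↦ b ^ k / Gamma (ζ * k + μ) *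
      (x ^ (ζ * k + μ - 1) * exp (-(s * x)))) (volume.restrict (Set.Ioi 0)) := by
  have hp : 0 < ζ * k + μ := by positivity
  refine Integrable.const_mul ?_ _
  -- A Bochner integral with a nonzero value forces integrability.
  refine not_imp_comm.1 integral_undef ?_
  rw [integral_rpow_mul_exp_neg_mul_Ioi hp hs]
  have := Gamma_pos_of_pos hp
  positivity

/-- Classical case of the paper's Lemma 2: the Laplace transform of
`x ↦ x^(μ-1) E_{ζ,μ}(-a x^ζ)` equals `s^(ζ-μ)/(s^ζ + a)`. -/
theorem stmt_2 (ζ μ a s : ℝ) (hζ : 0 < ζ) (hμ : 0 < μ) (hs : 0 < s)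
    (ha : |a| < s ^ ζ) :
    ∫ x in Set.Ioi (0 : ℝ),
        Real.exp (-(s * x)) * (x ^ (μ - 1) *
          ∑' k : ℕ, (-(a * x ^ ζ)) ^ k / Real.Gamma (ζ * k + μ))
      = s ^ (ζ - μ) / (s ^ ζ + a) := by
  have hsζ : 0 < s ^ ζ := rpow_pos_of_pos hs ζ
  have hsμ : 0 < s ^ μ := rpow_pos_of_pos hs μ
  have hnorm (k : ℕ) : ∫ x in Set.Ioi (0 : ℝ),
      ‖(-a) ^ k / Gamma (ζ * k + μ) * (x ^ (ζ * k + μ - 1) * exp (-(s * x)))‖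
        = (s ^ μ)⁻¹ * (|a| / s ^ ζ) ^ k := by
    rw [← integral_mittagLeffler_term ζ μ |a| s hζ hμ hs k]
    refine setIntegral_congr_fun measurableSet_Ioi fun x hx ↦ ?_
    have hx : 0 < x := hx
    have hG : 0 < Gamma (ζ * k + μ) := Gamma_pos_of_pos (by positivity)
    have hy : 0 < x ^ (ζ * k + μ - 1) * exp (-(s * x)) := by positivity
    simp only [norm_mul _ (x ^ (ζ * k + μ - 1) * exp (-(s * x))), norm_div, norm_pow, norm_neg,
      norm_of_nonneg hG.le, norm_of_nonneg hy.le, norm_eq_abs a]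
  have hsum : Summable fun k : ℕ ↦ ∫ x in Set.Ioi (0 : ℝ),
      ‖(-a) ^ k / Gamma (ζ * k + μ) * (x ^ (ζ * k + μ - 1) * exp (-(s * x)))‖ := by
    simp only [hnorm]
    exact (summable_geometric_of_lt_one (by positivity) ((div_lt_one hsζ).2 ha)).mul_left _
  have key := hasSum_integral_of_summable_integral_norm
    (integrable_mittagLeffler_term ζ μ (-a) s hζ hμ hs) hsum
  simp only [integral_mittagLeffler_term ζ μ (-a) s hζ hμ hs] at key
  have hgeom : HasSum (fun k : ℕ ↦ (s ^ μ)⁻¹ * (-a / s ^ ζ) ^ k)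
      ((s ^ μ)⁻¹ * (1 - -a / s ^ ζ)⁻¹) := by
    refine (hasSum_geometric_of_abs_lt_one ?_).mul_left _
    rwa [abs_div, abs_neg, abs_of_pos hsζ, div_lt_one hsζ]
  have hden : s ^ ζ + a ≠ 0 := ne_of_gt (by linarith [(abs_lt.1 ha).1])
  calc _ = ∫ x in Set.Ioi (0 : ℝ), ∑' k : ℕ,
        (-a) ^ k / Gamma (ζ * k + μ) * (x ^ (ζ * k + μ - 1) * exp (-(s * x))) := by
        refine setIntegral_congr_fun measurableSet_Ioi fun x hx ↦ ?_
        have hx : 0 < x := hx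
        simp only [← tsum_mul_left]
        refine tsum_congr fun k ↦ ?_
        rw [add_sub_assoc, rpow_add hx, rpow_mul hx.le, rpow_natCast, neg_mul_eq_neg_mul a, mul_pow]
        ring
    _ = (s ^ μ)⁻¹ * (1 - -a / s ^ ζ)⁻¹ := key.unique hgeom
    _ = s ^ (ζ - μ) / (s ^ ζ + a) := by
        have h1 : 1 - -a / s ^ ζ = (s ^ ζ + a) / s ^ ζ := by field_simp; ring
        rw [h1, rpow_sub hs, inv_div]
        field_simp
end

section
/- Let ζ ≥ μ > 0 be real numbers, let n be a natural number, let a ∈ ℝ, and let s > 0 be a real number with s^{ζ-μ} > |a|. Then ∫_0^∞ e^{-s x} · x^{ζ(n+1)-1} · ( Σ_{k=0}^∞ C(n+k, k) · (-a)^k · x^{k(ζ-μ)} / Γ(k(ζ-μ) + (n+1)ζ) ) dx = (s^ζ + a s^μ)^{-(n+1)}. -/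
open Real MeasureTheory

/-!
The Laplace transform is computed term by term. With `c = k(ζ-μ) + (n+1)ζ > 0`, the `k`-th term of
the integrand is `K x^(c-1) e^{-sx}` with `K = C(n+k,k) (-a)^k / Γ(c)`, and Euler's integral
`∫ x^(c-1) e^{-sx} dx = Γ(c) s^{-c}` turns it into `s^{-ζ(n+1)} C(n+k,k) r^k`, where
`r = -a / s^(ζ-μ)`. Since `|r| < 1`, the negative binomial series `∑ C(n+k,k) r^k = (1-r)^{-(n+1)}`
converges absolutely; this both justifies exchanging sum and integral (the `L¹` norms of the terms
are the same expressions with `|r|` in place of `r`) and evaluates the result, because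
`s^ζ (1-r) = s^ζ + a s^μ`.
-/

lemma integrableOn_rpow_sub_one_mul_exp {c s : ℝ} (hc : 0 < c) (hs : 0 < s) :
    IntegrableOn (fun x : ℝ => x ^ (c - 1) * Real.exp (-(s * x))) (Set.Ioi 0) := by
  have h := integrableOn_rpow_mul_exp_neg_mul_rpow (p := 1) (s := c - 1) (by linarith)
    one_pos hs
  simpa using h

/-- Euler's integral scaled by `s`, and the splitting of `s^{-c}` into the geometric part
`(1 / s^d)^k` and the part independent of `k`. -/
lemma laplace_term {d b s : ℝ} (k : ℕ) (hc : 0 < (k : ℝ) * d + b) (hs : 0 < s) (K : ℝ) :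
    ∫ x in Set.Ioi (0 : ℝ), K / Real.Gamma ((k : ℝ) * d + b) *
        (x ^ ((k : ℝ) * d + b - 1) * Real.exp (-(s * x)))
      = K * (1 / s ^ d) ^ k * (s ^ b)⁻¹ := by
  rw [integral_const_mul, Real.integral_rpow_mul_exp_neg_mul_Ioi hc hs]
  have hG := (Real.Gamma_pos_of_pos hc).ne'
  have hp : (1 / s) ^ ((k : ℝ) * d + b) = (1 / s ^ d) ^ k * (s ^ b)⁻¹ := by
    rw [one_div, one_div, Real.inv_rpow hs.le, Real.rpow_add hs, mul_inv, mul_comm (k : ℝ) d,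
      Real.rpow_mul_natCast hs.le, inv_pow]
  rw [hp]
  field_simp

/-- The paper's Lemma 3 (classical case): the Laplace transform of
`x ↦ x^(ζ(n+1)-1) Σ C(n+k,k)(-a)^k x^(k(ζ-μ))/Γ(k(ζ-μ)+(n+1)ζ)` equals
`(s^ζ + a s^μ)^(-(n+1))`. -/
theorem stmt_4 (ζ μ a s : ℝ) (n : ℕ) (hμ : 0 < μ) (hζμ : μ ≤ ζ) (hs : 0 < s)
    (ha : |a| < s ^ (ζ - μ)) :
    ∫ x in Set.Ioi (0 : ℝ),
        Real.exp (-(s * x)) * (x ^ (ζ * ((n : ℝ) + 1) - 1) *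
          ∑' k : ℕ, (Nat.choose (n + k) k : ℝ) * (-a) ^ k *
            x ^ ((k : ℝ) * (ζ - μ)) /
              Real.Gamma ((k : ℝ) * (ζ - μ) + ((n : ℝ) + 1) * ζ))
      = (s ^ ζ + a * s ^ μ) ^ (-((n : ℝ) + 1)) := by
  have hζ : 0 < ζ := hμ.trans_le hζμ
  have hd : 0 ≤ ζ - μ := sub_nonneg.2 hζμ
  have hc : ∀ k : ℕ, 0 < (k : ℝ) * (ζ - μ) + ((n : ℝ) + 1) * ζ := fun k => by positivity
  have hsd : 0 < s ^ (ζ - μ) := Real.rpow_pos_of_pos hs _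
  set F : ℕ → ℝ → ℝ := fun k x =>
    ((Nat.choose (n + k) k : ℝ) * (-a) ^ k) / Real.Gamma ((k : ℝ) * (ζ - μ) + ((n : ℝ) + 1) * ζ) *
      (x ^ ((k : ℝ) * (ζ - μ) + ((n : ℝ) + 1) * ζ - 1) * Real.exp (-(s * x))) with hF
  have hpt : ∀ x ∈ Set.Ioi (0 : ℝ), Real.exp (-(s * x)) * (x ^ (ζ * ((n : ℝ) + 1) - 1) *
      ∑' k : ℕ, (Nat.choose (n + k) k : ℝ) * (-a) ^ k * x ^ ((k : ℝ) * (ζ - μ)) /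
        Real.Gamma ((k : ℝ) * (ζ - μ) + ((n : ℝ) + 1) * ζ)) = ∑' k, F k x := by
    intro x hx
    rw [← tsum_mul_left, ← tsum_mul_left]
    refine tsum_congr fun k => ?_
    have : x ^ ((k : ℝ) * (ζ - μ) + ((n : ℝ) + 1) * ζ - 1)
        = x ^ ((k : ℝ) * (ζ - μ)) * x ^ (ζ * ((n : ℝ) + 1) - 1) := by
      rw [← Real.rpow_add hx]; congr 1; ring
    simp only [hF, this]
    ring
  rw [setIntegral_congr_fun measurableSet_Ioi hpt]
  have hint : ∀ k, Integrable (F k) (volume.restrict (Set.Ioi 0)) := fun k =>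
    (integrableOn_rpow_sub_one_mul_exp (hc k) hs).const_mul _
  have hnorm : ∀ k, ∫ x in Set.Ioi (0 : ℝ), ‖F k x‖
      = (s ^ (((n : ℝ) + 1) * ζ))⁻¹ * (((k + n).choose n : ℝ) * (|a| / s ^ (ζ - μ)) ^ k) := by
    intro k
    have h : ∀ x ∈ Set.Ioi (0 : ℝ), ‖F k x‖ = ((Nat.choose (n + k) k : ℝ) * |a| ^ k) /
        Real.Gamma ((k : ℝ) * (ζ - μ) + ((n : ℝ) + 1) * ζ) *
      (x ^ ((k : ℝ) * (ζ - μ) + ((n : ℝ) + 1) * ζ - 1) * Real.exp (-(s * x))) := by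
      intro x hx
      have h1 := Real.rpow_nonneg (le_of_lt hx) ((k : ℝ) * (ζ - μ) + ((n : ℝ) + 1) * ζ - 1)
      simp only [hF, Real.norm_eq_abs, abs_mul, abs_div, abs_pow, abs_neg, Nat.abs_cast,
        abs_of_pos (Real.Gamma_pos_of_pos (hc k)), abs_of_nonneg h1, Real.abs_exp]
    rw [setIntegral_congr_fun measurableSet_Ioi h, laplace_term k (hc k) hs, add_comm n k,
      Nat.choose_symm_add]
    ring
  have hsum : Summable fun k => ∫ x in Set.Ioi (0 : ℝ), ‖F k x‖ := by
    have hr : ‖|a| / s ^ (ζ - μ)‖ < 1 := by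
      rw [Real.norm_of_nonneg (by positivity)]
      exact (div_lt_one hsd).2 ha
    simp only [hnorm]
    exact (hasSum_choose_mul_geometric_of_norm_lt_one n hr).summable.mul_left _
  rw [← (hasSum_integral_of_summable_integral_norm hint hsum).tsum_eq]
  have hval : ∀ k, ∫ x in Set.Ioi (0 : ℝ), F k x
      = (s ^ (((n : ℝ) + 1) * ζ))⁻¹ * (((k + n).choose n : ℝ) * (-a / s ^ (ζ - μ)) ^ k) := by
    intro k
    rw [laplace_term k (hc k) hs, add_comm n k, Nat.choose_symm_add]
    ring
  have hr : ‖-a / s ^ (ζ - μ)‖ < 1 := by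
    rw [norm_div, norm_neg, Real.norm_of_nonneg hsd.le]
    exact (div_lt_one hsd).2 ha
  simp only [hval]
  rw [tsum_mul_left, tsum_choose_mul_geometric_of_norm_lt_one n hr]
  have hr1 : 0 < 1 - -a / s ^ (ζ - μ) := sub_pos.2 ((le_abs_self _).trans_lt hr)
  have hfac : s ^ ζ + a * s ^ μ = s ^ ζ * (1 - -a / s ^ (ζ - μ)) := by
    have h : s ^ ζ = s ^ (ζ - μ) * s ^ μ := by rw [← Real.rpow_add hs]; congr 1; ring
    rw [h]
    field_simp
    ring
  have hn : (n : ℝ) + 1 = ((n + 1 : ℕ) : ℝ) := by push_cast; rfl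
  rw [hfac, Real.rpow_neg (by positivity), hn, Real.rpow_natCast, mul_comm _ ζ,
    Real.rpow_mul_natCast hs.le, mul_pow, mul_inv, one_div]
end
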